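/- Fix a miscoverage level α ∈ (0,1), integers n ≥ 1 and K ≥ 1 with ⌈(1−α)(n+1)⌉ ≤ n. Let (Ẑ_0,Z_0),(Ẑ_1,Z_1),…,(Ẑ_n,Z_n) be exchangeable random pairs taking values in ℝ^K × ℝ^K (their joint law is invariant under any permutation of the n+1 indices). For each k ∈ {1,…,K} let s_k : ℝ×ℝ → ℝ be a measurable nonconformity score function and let G_k : ℝ → ℝ be a fixed (deterministic) nondecreasing function. Define the transformed scores s̄_i = max_{1≤k≤K} G_k(s_k(Ẑ_{i,k}, Z_{i,k})) for i = 0,1,…,n, and let λ̂ be the ⌈(1−α)(n+1)⌉-th smallest value among s̄_1,…,s̄_n. Then Pr{ for all k ∈ {1,…,K}: G_k(s_k(Ẑ_{0,k}, Z_{0,k})) ≤ λ̂ } ≥ 1−α; equivalently, with prediction sets C_k(Ẑ_0) = { z ∈ ℝ : G_k(s_k(Ẑ_{0,k}, z)) ≤ λ̂ }, one has Pr{ ∩_{k=1}^K { Z_{0,k} ∈ C_k(Ẑ_0) } } ≥ 1−α. -/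

import Mathlib

open MeasureTheory

/-- The `k`-th smallest value among `f 0, …, f (n-1)` (for `1 ≤ k ≤ n`), defined as
`inf{ t : at least k of the values are ≤ t }`. -/
noncomputable def kthSmallest {n : ℕ} (f : Fin n → ℝ) (k : ℕ) : ℝ :=
  sInf {t : ℝ | k ≤ {i : Fin n | f i ≤ t}.ncard}

/-!
By exchangeability the rank of the test score among all `n + 1` scores has the same law as the rank
of any other score. At least `m` of the `n + 1` scores always have fewer than `m` scores strictly
below them, whatever the ties, so the test score has this property with probability at least
`m / (n + 1)`. When it does, it is at most the `m`-th smallest of the other `n` scores; now take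
`m = ⌈(1 - α)(n + 1)⌉`. Coverage is joint because all `K` scores are bounded by `t` exactly when
their maximum is.
-/

open Finset

lemma le_kthSmallest_of_card_lt {n k : ℕ} (hk : k ≤ n) {f : Fin n → ℝ} {x : ℝ}
    (h : #{i | f i < x} < k) : x ≤ kthSmallest f k := by
  refine le_csInf ?_ fun t ht ↦ ?_
  · obtain ⟨b, hb⟩ := (Set.finite_range f).bddAbove
    have hall : {i | f i ≤ b} = Set.univ := Set.eq_univ_of_forall fun i ↦ hb ⟨i, rfl⟩
    exact ⟨b, by simpa [hall, Set.ncard_univ] using hk⟩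
  · by_contra! htx
    have hsub : {i | f i ≤ t} ⊆ (({i | f i < x} : Finset (Fin n)) : Set (Fin n)) :=
      fun i (hi : f i ≤ t) ↦ by simpa using hi.trans_lt htx
    have hcard := Set.ncard_le_ncard hsub
    rw [Set.ncard_coe_finset] at hcard
    exact (ht.trans hcard).not_gt h

section StrictRank

variable {ι E : Type*} [Fintype ι] [LinearOrder E]

/-- The number of entries of `v` strictly below `v j`; ranks start at `0`, and ties share a rank. -/
def strictRank (v : ι → E) (j : ι) : ℕ := #{i | v i < v j}

lemma strictRank_comp_perm (v : ι → E) (σ : Equiv.Perm ι) (j : ι) :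
    strictRank (fun i ↦ v (σ i)) j = strictRank v (σ j) := by
  simp only [strictRank, card_filter]
  exact Equiv.sum_comp σ fun i ↦ if v i < v (σ j) then 1 else 0

lemma strictRank_zero_eq_card_succ {n : ℕ} (v : Fin (n + 1) → E) :
    strictRank v 0 = #{i : Fin n | v i.succ < v 0} := by
  simp [strictRank, Fin.card_filter_univ_succ]

-- Everything below a minimal entry of rank at least `m` has rank less than `m`.
lemma le_card_strictRank_lt {m : ℕ} (hm : m ≤ Fintype.card ι) (v : ι → E) :
    m ≤ #{j | strictRank v j < m} := by
  by_cases hall : ∀ j, strictRank v j < m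
  · simpa [hall] using hm
  have hne : ({j | m ≤ strictRank v j} : Finset ι).Nonempty := by
    simpa [Finset.Nonempty] using hall
  obtain ⟨j, hj, hmin⟩ := exists_min_image _ v hne
  calc m ≤ strictRank v j := by simpa using hj
    _ ≤ #{i | strictRank v i < m} := by
      refine card_le_card fun i hi ↦ ?_
      simp only [mem_filter, mem_univ, true_and] at hi hmin ⊢
      contrapose! hi
      exact hmin i hi

lemma measurable_strictRank [TopologicalSpace E] [OrderClosedTopology E]
    [SecondCountableTopology E] [MeasurableSpace E] [OpensMeasurableSpace E] (j : ι) :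
    Measurable fun v : ι → E ↦ strictRank v j := by
  simp only [strictRank, card_filter]
  exact measurable_fun_sum _ fun i _ ↦ Measurable.ite
    (measurableSet_lt (measurable_pi_apply i) (measurable_pi_apply j))
    measurable_const measurable_const

end StrictRank

lemma lintegral_card_filter_mem {Ω ι : Type*} [MeasurableSpace Ω] [Fintype ι] {μ : Measure Ω}
    {A : ι → Set Ω} [∀ ω, DecidablePred fun i ↦ ω ∈ A i] (hA : ∀ i, NullMeasurableSet (A i) μ) :
    ∫⁻ ω, (#{i | ω ∈ A i} : ENNReal) ∂μ = ∑ i, μ (A i) := by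
  calc ∫⁻ ω, (#{i | ω ∈ A i} : ENNReal) ∂μ
      = ∫⁻ ω, ∑ i, (A i).indicator 1 ω ∂μ := by
        simp only [natCast_card_filter, Set.indicator_apply, Pi.one_apply]
    _ = ∑ i, ∫⁻ ω, (A i).indicator 1 ω ∂μ :=
        lintegral_finsetSum' _ fun i _ ↦ aemeasurable_one.indicator₀ (hA i)
    _ = ∑ i, μ (A i) := by simp only [lintegral_indicator_one₀ (hA _)]

/-- A family of random variables is exchangeable if permuting its indices does not change the
joint law. All permutations of the index type count, not only the finitely supported ones. -/
def Exchangeable {Ω ι E : Type*} [MeasurableSpace Ω] [MeasurableSpace E] (X : ι → Ω → E)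
    (μ : Measure Ω) : Prop :=
  ∀ σ : Equiv.Perm ι, μ.map (fun ω i ↦ X (σ i) ω) = μ.map (fun ω i ↦ X i ω)

namespace Exchangeable

variable {Ω ι E : Type*} [MeasurableSpace Ω] [MeasurableSpace E] {μ : Measure Ω} {X : ι → Ω → E}

lemma comp {F : Type*} [MeasurableSpace F] [Countable ι] (h : Exchangeable X μ)
    (hX : ∀ i, AEMeasurable (X i) μ) {g : E → F} (hg : Measurable g) :
    Exchangeable (fun i ω ↦ g (X i ω)) μ := fun σ ↦ by
  have hgπ : Measurable fun (x : ι → E) i ↦ g (x i) := by fun_prop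
  have hmap (τ : Equiv.Perm ι) :
      μ.map (fun ω i ↦ g (X (τ i) ω)) = (μ.map fun ω i ↦ X (τ i) ω).map fun x i ↦ g (x i) :=
    (AEMeasurable.map_map_of_aemeasurable hgπ.aemeasurable
      (aemeasurable_pi_lambda _ fun i ↦ hX (τ i))).symm
  exact (hmap σ).trans ((congrArg _ (h σ)).trans (hmap 1).symm)

variable [Fintype ι] [LinearOrder E] [TopologicalSpace E] [OrderClosedTopology E]
  [SecondCountableTopology E] [OpensMeasurableSpace E]

lemma measure_strictRank_lt_eq (h : Exchangeable X μ) (hX : ∀ i, AEMeasurable (X i) μ)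
    (m : ℕ) (j k : ι) :
    μ {ω | strictRank (fun i ↦ X i ω) j < m} = μ {ω | strictRank (fun i ↦ X i ω) k < m} := by
  classical
  have hmeas : MeasurableSet {v : ι → E | strictRank v k < m} :=
    measurableSet_lt (measurable_strictRank k) measurable_const
  have hswap := congrArg (fun ν ↦ ν {v : ι → E | strictRank v k < m}) (h (Equiv.swap j k))
  simpa only [Measure.map_apply_of_aemeasurable (aemeasurable_pi_lambda _ fun _ ↦ hX _) hmeas,
    Set.preimage_ofPred_eq, fun ω ↦ strictRank_comp_perm (fun i ↦ X i ω) (Equiv.swap j k) k,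
    Equiv.swap_apply_right] using hswap

lemma le_card_mul_measure_strictRank_lt (h : Exchangeable X μ) (hX : ∀ i, AEMeasurable (X i) μ)
    {m : ℕ} (hm : m ≤ Fintype.card ι) (j : ι) :
    m * μ Set.univ ≤ Fintype.card ι * μ {ω | strictRank (fun i ↦ X i ω) j < m} := by
  have hA (k : ι) : NullMeasurableSet {ω | strictRank (fun i ↦ X i ω) k < m} μ :=
    (aemeasurable_pi_lambda _ hX).nullMeasurableSet_preimage
      (measurableSet_lt (measurable_strictRank k) measurable_const)
  calc m * μ Set.univ = ∫⁻ _, m ∂μ := (lintegral_const _).symm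
    _ ≤ ∫⁻ ω, #{k | strictRank (fun i ↦ X i ω) k < m} ∂μ :=
        lintegral_mono fun ω ↦ Nat.cast_le.mpr (le_card_strictRank_lt hm fun i ↦ X i ω)
    _ = ∑ k, μ {ω | strictRank (fun i ↦ X i ω) k < m} :=
        lintegral_card_filter_mem (A := fun k ↦ {ω | strictRank (fun i ↦ X i ω) k < m}) hA
    _ = Fintype.card ι * μ {ω | strictRank (fun i ↦ X i ω) j < m} := by
        simp only [h.measure_strictRank_lt_eq hX m _ j, sum_const, card_univ, nsmul_eq_mul]

lemma ofReal_le_measure_le_kthSmallest [IsProbabilityMeasure μ] {n m : ℕ}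
    {X : Fin (n + 1) → Ω → ℝ} (h : Exchangeable X μ) (hX : ∀ i, AEMeasurable (X i) μ)
    {p : ℝ} (hp : p * (n + 1) ≤ m) (hm : m ≤ n) :
    ENNReal.ofReal p ≤ μ {ω | X 0 ω ≤ kthSmallest (fun i : Fin n ↦ X i.succ ω) m} := by
  have hrank : (m : ENNReal) ≤ (n + 1 : ℕ) * μ {ω | strictRank (fun i ↦ X i ω) 0 < m} := by
    simpa using h.le_card_mul_measure_strictRank_lt hX (by simpa using hm.trans n.le_succ) 0
  have hp' : (n + 1 : ℕ) * ENNReal.ofReal p ≤ m := by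
    rw [← ENNReal.ofReal_natCast, ← ENNReal.ofReal_natCast,
      ← ENNReal.ofReal_mul (Nat.cast_nonneg _), mul_comm]
    exact ENNReal.ofReal_le_ofReal (by exact_mod_cast hp)
  calc ENNReal.ofReal p ≤ μ {ω | strictRank (fun i ↦ X i ω) 0 < m} :=
        (ENNReal.mul_le_mul_iff_right (Nat.cast_ne_zero.mpr n.succ_ne_zero)
          (ENNReal.natCast_ne_top _)).mp (hp'.trans hrank)
    _ ≤ μ {ω | X 0 ω ≤ kthSmallest (fun i : Fin n ↦ X i.succ ω) m} :=
        measure_mono fun ω hω ↦ le_kthSmallest_of_card_lt hm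
          ((strictRank_zero_eq_card_succ fun i ↦ X i ω).symm.trans_lt hω)

end Exchangeable

theorem joint_marginal_coverage_general {Ω 𝓧 κ : Type*} [MeasurableSpace Ω] [MeasurableSpace 𝓧]
    [Fintype κ] [Nonempty κ] {P : Measure Ω} [IsProbabilityMeasure P] {α : ℝ} {n : ℕ}
    (hceil : ⌈(1 - α) * (n + 1 : ℝ)⌉ ≤ (n : ℤ)) {W : Fin (n + 1) → Ω → 𝓧}
    (hW : ∀ i, AEMeasurable (W i) P) (hexch : Exchangeable W P)
    {S : κ → 𝓧 → ℝ} (hS : ∀ k, Measurable (S k)) :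
    ENNReal.ofReal (1 - α) ≤
      P {ω | ∀ k, S k (W 0 ω) ≤
        kthSmallest (fun i : Fin n ↦ univ.sup' univ_nonempty fun k ↦ S k (W i.succ ω))
          ⌈(1 - α) * (n + 1 : ℝ)⌉.toNat} := by
  have hmax : Measurable fun w ↦ univ.sup' univ_nonempty fun k ↦ S k w := by
    simpa only [← Finset.sup'_apply] using measurable_sup' univ_nonempty fun k _ ↦ hS k
  have hlevel : (1 - α) * (n + 1 : ℝ) ≤ ⌈(1 - α) * (n + 1 : ℝ)⌉.toNat := by
    simpa only [Int.ceil_toNat] using Nat.le_ceil _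
  simpa only [sup'_le_iff, mem_univ, true_imp_iff] using
    (hexch.comp hW hmax).ofReal_le_measure_le_kthSmallest
      (fun i ↦ hmax.comp_aemeasurable (hW i)) hlevel (Int.toNat_le.mpr hceil)

/-- Let `α ∈ (0,1)`, `n ≥ 1`, `K ≥ 1` with `⌈(1−α)(n+1)⌉ ≤ n`. Let
`(Ẑ_0,Z_0), …, (Ẑ_n,Z_n)` be exchangeable random pairs in `ℝ^K × ℝ^K`, let
`s_k : ℝ × ℝ → ℝ` be measurable nonconformity scores, and `G_k : ℝ → ℝ` fixed nondecreasing
functions. With transformed scores `s̄_i = max_k G_k(s_k(Ẑ_{i,k}, Z_{i,k}))` and `λ̂` the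
`⌈(1−α)(n+1)⌉`-th smallest of `s̄_1, …, s̄_n`, one has
`Pr{ ∀ k, G_k(s_k(Ẑ_{0,k}, Z_{0,k})) ≤ λ̂ } ≥ 1 − α`. -/
theorem joint_marginal_coverage {Ω : Type*} [MeasurableSpace Ω]
    (P : Measure Ω) [IsProbabilityMeasure P]
    (α : ℝ) (hα : α ∈ Set.Ioo (0 : ℝ) 1)
    (n K : ℕ) (hn : 1 ≤ n) (hK : 1 ≤ K)
    (hceil : ⌈(1 - α) * (n + 1 : ℝ)⌉ ≤ (n : ℤ))
    (W : Fin (n + 1) → Ω → (Fin K → ℝ) × (Fin K → ℝ))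
    (hW : ∀ i, Measurable (W i))
    (hexch : ∀ σ : Equiv.Perm (Fin (n + 1)),
      Measure.map (fun ω => fun i => W (σ i) ω) P =
        Measure.map (fun ω => fun i => W i ω) P)
    (s : Fin K → ℝ → ℝ → ℝ)
    (hs : ∀ k, Measurable (fun q : ℝ × ℝ => s k q.1 q.2))
    (G : Fin K → ℝ → ℝ) (hG : ∀ k, Monotone (G k)) :
    ENNReal.ofReal (1 - α) ≤
      P {ω | ∀ k : Fin K,
        G k (s k ((W 0 ω).1 k) ((W 0 ω).2 k)) ≤
          kthSmallest
            (fun i : Fin n =>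
              Finset.univ.sup'
                (Finset.univ_nonempty_iff.mpr (Fin.pos_iff_nonempty.mp hK))
                (fun k' => G k' (s k' ((W i.succ ω).1 k') ((W i.succ ω).2 k'))))
            (⌈(1 - α) * (n + 1 : ℝ)⌉.toNat)} := by
  have : Nonempty (Fin K) := Fin.pos_iff_nonempty.mp hK
  exact joint_marginal_coverage_general hceil (fun i ↦ (hW i).aemeasurable) hexch
    fun k ↦ (hG k).measurable.comp <| (hs k).comp <|
      (measurable_pi_apply k).prodMap (measurable_pi_apply k)
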